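/- (Proposition 1, limiting loss distribution.) Assume Λ ≠ 0 and let L̄ = Φ(Ξ/(ζ√T) − ΛY/ζ), where Y is standard normal. Then for every x ∈ (0,1), ℙ[L̄ ≤ x] = Φ((ζ·Φ⁻¹(x) − Σ·Φ⁻¹(p))/|Λ|), where p = Φ(Ξ/(Σ√T)). -/

import Mathlib

open MeasureTheory ProbabilityTheory Real Filter Set

/-- The density of the standard normal distribution. -/
noncomputable def stdPdf (y : ℝ) : ℝ := Real.exp (-y ^ 2 / 2) / Real.sqrt (2 * Real.pi)

/-- The cumulative distribution function `Φ` of the standard normal distribution. -/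
noncomputable def stdCdf (x : ℝ) : ℝ := ∫ y in Set.Iic x, stdPdf y

/-- The inverse `Φ⁻¹` of the standard normal cumulative distribution function: since `stdCdf`
is injective, `stdCdfInv` is the genuine inverse of `Φ` on `(0,1)`. -/
noncomputable def stdCdfInv : ℝ → ℝ := Function.invFun stdCdf

/-!
`X = Ξ / (ζ √T) - Λ Y / ζ` is Gaussian with mean `Ξ / (ζ √T)` and standard deviation `|Λ| / ζ`.
Since `Φ` is a strictly increasing bijection of `ℝ` onto `(0, 1)`, the event `Φ(X) ≤ x` is
`X ≤ Φ⁻¹(x)`, and standardizing `X` gives its probability. Likewise `Σ Φ⁻¹(p) = Ξ / √T`.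
-/

section Cdf

variable (μ : Measure ℝ) [IsProbabilityMeasure μ]

lemma strictMono_cdf [μ.IsOpenPosMeasure] : StrictMono (cdf μ) := by
  intro a b hab
  have hIoc : 0 < μ (Ioc a b) :=
    (isOpen_Ioo.measure_pos μ (nonempty_Ioo.2 hab)).trans_le (measure_mono Ioo_subset_Ioc_self)
  rw [← measure_cdf μ, StieltjesFunction.measure_Ioc, ENNReal.ofReal_pos] at hIoc
  exact sub_pos.1 hIoc

lemma continuous_cdf [NullSingletonClass μ] : Continuous (cdf μ) := by
  refine continuous_iff_continuousAt.2 fun a ↦ ?_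
  have hjump : ENNReal.ofReal (cdf μ a - Function.leftLim (cdf μ) a) = 0 := by
    rw [← StieltjesFunction.measure_singleton, measure_cdf, measure_singleton]
  have hle : cdf μ a ≤ Function.leftLim (cdf μ) a := sub_nonpos.1 (ENNReal.ofReal_eq_zero.1 hjump)
  rw [(monotone_cdf μ).continuousAt_iff_leftLim_eq_rightLim, (cdf μ).rightLim_eq]
  exact ((monotone_cdf μ).leftLim_le le_rfl).antisymm hle

lemma Ioo_subset_range_cdf [NullSingletonClass μ] : Ioo 0 1 ⊆ range (cdf μ) := fun _ hx ↦
  mem_range_of_exists_le_of_exists_ge (continuous_cdf μ)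
    ((tendsto_cdf_atBot μ).eventually_le_const hx.1).exists
    ((tendsto_cdf_atTop μ).eventually_const_le hx.2).exists

end Cdf

lemma stdPdf_eq_gaussianPDFReal : stdPdf = gaussianPDFReal 0 1 := by
  ext y
  simp [stdPdf, gaussianPDFReal, div_eq_mul_inv, mul_comm]

lemma stdCdf_eq_cdf_gaussianReal : stdCdf = cdf (gaussianReal 0 1) := by
  ext x
  rw [cdf_eq_real, measureReal_def, gaussianReal_apply_eq_integral 0 one_ne_zero,
    ENNReal.toReal_ofReal (integral_nonneg (gaussianPDFReal_nonneg 0 1)), stdCdf,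
    stdPdf_eq_gaussianPDFReal]

lemma strictMono_stdCdf : StrictMono stdCdf := by
  have := (gaussianReal_absolutelyContinuous' 0 one_ne_zero).isOpenPosMeasure
  rw [stdCdf_eq_cdf_gaussianReal]
  exact strictMono_cdf _

lemma stdCdfInv_stdCdf (y : ℝ) : stdCdfInv (stdCdf y) = y :=
  Function.leftInverse_invFun strictMono_stdCdf.injective y

lemma stdCdf_stdCdfInv {x : ℝ} (hx : x ∈ Ioo (0 : ℝ) 1) : stdCdf (stdCdfInv x) = x := by
  have := nullSingletonClass_gaussianReal (μ := 0) (v := 1) one_ne_zero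
  refine Function.invFun_eq ?_
  rw [stdCdf_eq_cdf_gaussianReal]
  exact Ioo_subset_range_cdf _ hx

lemma stdCdf_le_iff_le_stdCdfInv {x y : ℝ} (hx : x ∈ Ioo (0 : ℝ) 1) :
    stdCdf y ≤ x ↔ y ≤ stdCdfInv x := by
  rw [← strictMono_stdCdf.le_iff_le (b := stdCdfInv x), stdCdf_stdCdfInv hx]

section GaussianLaw

open scoped NNReal

variable {Ω : Type*} [MeasurableSpace Ω] {P : Measure Ω} {X : Ω → ℝ} {m : ℝ} {v : ℝ≥0}

lemma hasLaw_standardize_gaussianReal (hX : HasLaw X (gaussianReal m v) P) (hv : v ≠ 0) :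
    HasLaw (fun ω ↦ (X ω - m) / √v) (gaussianReal 0 1) P := by
  have hvar : NNReal.mk (√(v : ℝ) ^ 2) (sq_nonneg _) = v := NNReal.eq (sq_sqrt v.coe_nonneg)
  simpa only [sub_self, zero_div, hvar, div_self hv] using
    gaussianReal_div_const (gaussianReal_sub_const hX m) √v

lemma measure_le_of_hasLaw_gaussianReal (hX : HasLaw X (gaussianReal m v) P) (hv : v ≠ 0) (q : ℝ) :
    P {ω | X ω ≤ q} = ENNReal.ofReal (stdCdf ((q - m) / √v)) := by
  have hsd : 0 < √(v : ℝ) := sqrt_pos.2 (NNReal.coe_pos.2 (pos_iff_ne_zero.2 hv))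
  calc P {ω | X ω ≤ q}
      = P {ω | (X ω - m) / √v ≤ (q - m) / √v} := by
        simp only [div_le_div_iff_of_pos_right hsd, sub_le_sub_iff_right]
    _ = gaussianReal 0 1 (Iic ((q - m) / √v)) :=
        (hasLaw_standardize_gaussianReal hX hv).measure_eq measurableSet_Iic
    _ = ENNReal.ofReal (stdCdf ((q - m) / √v)) := by
        rw [stdCdf_eq_cdf_gaussianReal, ofReal_cdf]

lemma measure_stdCdf_le_of_hasLaw_gaussianReal (hX : HasLaw X (gaussianReal m v) P) (hv : v ≠ 0)
    {x : ℝ} (hx : x ∈ Ioo (0 : ℝ) 1) :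
    P {ω | stdCdf (X ω) ≤ x} = ENNReal.ofReal (stdCdf ((stdCdfInv x - m) / √v)) := by
  simp only [stdCdf_le_iff_le_stdCdfInv hx, measure_le_of_hasLaw_gaussianReal hX hv]

end GaussianLaw

/-- Proposition 1, limiting loss distribution: if `Λ ≠ 0` and
`L̄ = Φ(Ξ/(ζ√T) − ΛY/ζ)` with `Y` standard normal, then for every `x ∈ (0,1)`,
`ℙ[L̄ ≤ x] = Φ((ζ Φ⁻¹(x) − Σ Φ⁻¹(p))/|Λ|)` where `p = Φ(Ξ/(Σ√T))`. -/
theorem limiting_loss_distribution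
    {Ω : Type*} [MeasurableSpace Ω] (P : Measure Ω) [IsProbabilityMeasure P]
    (T A B μ α σ β ρ θ : ℝ)
    (hT : 0 < T) (hA : 0 < A) (hB : 0 < B) (hσ : 0 < σ) (hβ : 0 < β)
    (hρ : ρ ∈ Set.Icc (0 : ℝ) 1) (hθ : θ ∈ Set.Icc (0 : ℝ) 1)
    (Y : Ω → ℝ) (hmY : Measurable Y)
    (hY : Measure.map Y P = gaussianReal 0 1)
    (Sg Ξ ζ Λ : ℝ)
    (hSg : Sg = Real.sqrt (σ ^ 2 + β ^ 2 - 2 * σ * β * Real.sqrt (ρ * θ)))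
    (hΞ : Ξ = Real.log (B / A) - (μ - α - (σ ^ 2 - β ^ 2) / 2) * T)
    (hζ : ζ = Real.sqrt (σ ^ 2 * (1 - ρ) + β ^ 2 * (1 - θ)))
    (hΛ : Λ = σ * Real.sqrt ρ - β * Real.sqrt θ)
    (hSgpos : 0 < Sg) (hζpos : 0 < ζ) (hΛne : Λ ≠ 0)
    (p : ℝ) (hp : p = stdCdf (Ξ / (Sg * Real.sqrt T)))
    (x : ℝ) (hx : x ∈ Set.Ioo (0 : ℝ) 1) :
    P {ω | stdCdf (Ξ / (ζ * Real.sqrt T) - Λ * Y ω / ζ) ≤ x}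
      = ENNReal.ofReal (stdCdf ((ζ * stdCdfInv x - Sg * stdCdfInv p) / |Λ|)) := by
  have hlaw : HasLaw (fun ω ↦ Ξ / (ζ * √T) - Λ * Y ω / ζ)
      (gaussianReal (Ξ / (ζ * √T)) (.mk ((Λ / ζ) ^ 2) (sq_nonneg _))) P := by
    simpa only [mul_zero, mul_one, sub_zero, div_mul_eq_mul_div] using
      gaussianReal_const_sub (gaussianReal_const_mul ⟨hmY.aemeasurable, hY⟩ (Λ / ζ))
        (Ξ / (ζ * √T))
  have hvar : NNReal.mk ((Λ / ζ) ^ 2) (sq_nonneg _) ≠ 0 :=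
    NNReal.coe_ne_zero.1 (pow_ne_zero 2 (div_ne_zero hΛne hζpos.ne'))
  have hsd : √((Λ / ζ) ^ 2) = |Λ| / ζ := by rw [sqrt_sq_eq_abs, abs_div, abs_of_pos hζpos]
  have hthreshold : (stdCdfInv x - Ξ / (ζ * √T)) / (|Λ| / ζ) =
      (ζ * stdCdfInv x - Sg * (Ξ / (Sg * √T))) / |Λ| := by field_simp
  rw [measure_stdCdf_le_of_hasLaw_gaussianReal hlaw hvar hx, NNReal.coe_mk, hsd, hthreshold, hp,
    stdCdfInv_stdCdf]
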